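/- arXiv:0904.1237 — 2 statements merged into one kernel-verified Lean document; each statement's English description precedes it below -/
import Mathlib

section
/- Let h be a positive harmonic function on the open unit disc D ⊂ ℂ with h(0) = 1 and with vanishing gradient at the origin (the real Fréchet derivative of h at 0 is the zero map). Then for every λ ∈ D one has (1−|λ|²)/(1+|λ|²) ≤ h(λ) ≤ (1+|λ|²)/(1−|λ|²). -/
/-- A function `h : ℂ → ℝ` is harmonic on an open set `U` if it is twice continuously
differentiable there (viewing `ℂ` as `ℝ²`) and its Laplacian
`∂²h/∂x² + ∂²h/∂y²` vanishes on `U`. -/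
def HarmonicOnSet (h : ℂ → ℝ) (U : Set ℂ) : Prop :=
  ContDiffOn ℝ 2 h U ∧
    ∀ z ∈ U,
      fderiv ℝ (fun w => fderiv ℝ h w 1) z 1 +
        fderiv ℝ (fun w => fderiv ℝ h w Complex.I) z Complex.I = 0

/-!
A harmonic function `h` on a disc is the real part of a holomorphic function `f`. If `h ≥ 0`, then
composing `f` with the Cayley transform that sends `f c` to `0` gives a self-map of the unit disc.
If `h - h c` vanishes at the centre `c` to order more than `n`, then so does `f - f c` by the
Borel–Carathéodory inequality, and the Schwarz lemma of order `n + 1` bounds the Cayley transform of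
`f z` by `(‖z - c‖ / R) ^ (n + 1)`. Solving this bound for `(f z).re` gives Harnack's inequality;
the case `n = 1` is that of a vanishing gradient.
-/

open Metric Set Filter Asymptotics InnerProductSpace
open scoped Topology ComplexConjugate

theorem HarmonicOnSet.harmonicOnNhd {h : ℂ → ℝ} {U : Set ℂ} (hh : HarmonicOnSet h U)
    (hU : IsOpen U) : HarmonicOnNhd h U := by
  have hsmooth : ∀ z ∈ U, ContDiffAt ℝ 2 h z := fun z hz => hh.1.contDiffAt (hU.mem_nhds hz)
  intro z hz
  refine ⟨hsmooth z hz, ?_⟩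
  filter_upwards [hU.mem_nhds hz] with w hw
  have hw₂ := hsmooth w hw
  have hlaplacian := hh.2 w hw
  rw [fderiv_clm_apply (by fun_prop) (by fun_prop),
    fderiv_clm_apply (by fun_prop) (by fun_prop)] at hlaplacian
  simpa [laplacian_eq_iteratedFDeriv_complexPlane, iteratedFDeriv_two_apply] using hlaplacian

theorem isLittleO_sub_of_fderiv_eq_zero {𝕜 E F : Type*} [NontriviallyNormedField 𝕜]
    [NormedAddCommGroup E] [NormedSpace 𝕜 E] [NormedAddCommGroup F] [NormedSpace 𝕜 F]
    {f : E → F} {x : E} (hf : DifferentiableAt 𝕜 f x) (hf' : fderiv 𝕜 f x = 0) :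
    (f · - f x) =o[𝓝 x] (· - x) := by
  simpa [hf'] using hf.hasFDerivAt.isLittleO

section CayleyTransform

/-- The Cayley transform of the right half-plane onto the unit disc that sends `a` to `0`,
for `0 < a.re`; at its pole `-conj a` division by zero gives the value `0`. -/
noncomputable def cayleyTransform (a w : ℂ) : ℂ := (w - a) / (w + conj a)

variable {a w : ℂ}

theorem cayleyTransform_self (a : ℂ) : cayleyTransform a a = 0 := by
  simp [cayleyTransform]

theorem add_conj_ne_zero (ha : 0 < a.re) (hw : 0 ≤ w.re) : w + conj a ≠ 0 := by
  intro hzero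
  have hre : w.re + a.re = 0 := by simpa using congrArg Complex.re hzero
  linarith

theorem sq_norm_sub_eq (a w : ℂ) :
    ‖w - a‖ ^ 2 = (w.re - a.re) ^ 2 + (w.im - a.im) ^ 2 := by
  simp [Complex.sq_norm, Complex.normSq_apply, ← sq]

theorem sq_norm_add_conj_eq (a w : ℂ) :
    ‖w + conj a‖ ^ 2 = (w.re + a.re) ^ 2 + (w.im - a.im) ^ 2 := by
  simp [Complex.sq_norm, Complex.normSq_apply, ← sq, ← sub_eq_add_neg]

theorem norm_cayleyTransform_le_one (ha : 0 ≤ a.re) (hw : 0 ≤ w.re) :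
    ‖cayleyTransform a w‖ ≤ 1 := by
  rw [cayleyTransform, norm_div]
  refine div_le_one_of_le₀ (le_of_sq_le_sq ?_ (norm_nonneg _)) (norm_nonneg _)
  rw [sq_norm_sub_eq, sq_norm_add_conj_eq]
  nlinarith [mul_nonneg ha hw]

theorem abs_re_sub_re_le_of_norm_cayleyTransform_le {q : ℝ} (ha : 0 < a.re) (hw : 0 ≤ w.re)
    (hq : q ≤ 1) (h : ‖cayleyTransform a w‖ ≤ q) :
    |w.re - a.re| ≤ q * (w.re + a.re) := by
  have hq₀ : 0 ≤ q := (norm_nonneg _).trans h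
  have hnorm : ‖w - a‖ ≤ q * ‖w + conj a‖ := by
    rwa [cayleyTransform, norm_div,
      div_le_iff₀ (norm_pos_iff.2 (add_conj_ne_zero ha hw))] at h
  have hsq : ‖w - a‖ ^ 2 ≤ q ^ 2 * ‖w + conj a‖ ^ 2 := by
    rw [← mul_pow]
    gcongr
  rw [sq_norm_sub_eq, sq_norm_add_conj_eq] at hsq
  refine abs_le_of_sq_le_sq ?_ (by positivity)
  calc (w.re - a.re) ^ 2
      ≤ q ^ 2 * (w.re + a.re) ^ 2 - (1 - q ^ 2) * (w.im - a.im) ^ 2 := by linarith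
    _ ≤ q ^ 2 * (w.re + a.re) ^ 2 :=
        sub_le_self _ (mul_nonneg (sub_nonneg.2 (pow_le_one₀ hq₀ hq)) (sq_nonneg _))
    _ = (q * (w.re + a.re)) ^ 2 := (mul_pow ..).symm

end CayleyTransform

theorem norm_cayleyTransform_le_of_isLittleO {E : Type*} [NormedAddCommGroup E] [NormedSpace ℂ E]
    {f : E → ℂ} {c z : E} {R : ℝ} {n : ℕ} (hd : DifferentiableOn ℂ f (ball c R))
    (hre : ∀ w ∈ ball c R, 0 ≤ (f w).re) (hc : 0 < (f c).re)
    (ho : (f · - f c) =o[𝓝 c] (‖· - c‖ ^ n)) (hz : z ∈ ball c R) :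
    ‖cayleyTransform (f c) (f z)‖ ≤ (‖z - c‖ / R) ^ (n + 1) := by
  set g : E → ℂ := fun w => cayleyTransform (f c) (f w) with hg
  have hgc : g c = 0 := cayleyTransform_self (f c)
  have hgd : DifferentiableOn ℂ g (ball c R) := by
    simpa only [hg, cayleyTransform, div_eq_mul_inv] using (hd.sub_const _).fun_mul
      ((hd.add_const _).fun_inv fun w hw => add_conj_ne_zero hc (hre w hw))
  have hmaps : MapsTo g (ball c R) (closedBall (g c) 1) := fun w hw => by
    simpa [hgc] using norm_cayleyTransform_le_one hc.le (hre w hw)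
  have hfc : ContinuousAt f c :=
    hd.continuousOn.continuousAt (ball_mem_nhds c (pos_of_mem_ball hz))
  have hinv : (fun w => (f w + conj (f c))⁻¹) =O[𝓝 c] (fun _ => (1 : ℝ)) :=
    ((hfc.add_const _).inv₀ (add_conj_ne_zero hc hc.le)).isBigO_one ℝ
  have hgo : (g · - g c) =o[𝓝 c] (‖· - c‖ ^ n) := by
    simpa [hgc, hg, cayleyTransform, div_eq_mul_inv] using ho.mul_isBigO hinv
  simpa [hgc, dist_eq_norm] using
    Complex.dist_le_mul_div_pow_of_mapsTo_ball_of_isLittleO hgd hmaps hgo hz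

theorem norm_sub_le_of_re_sub_le {f : ℂ → ℂ} {c z : ℂ} {r M : ℝ} (hM : 0 < M)
    (hd : DifferentiableOn ℂ f (ball c r)) (hre : ∀ w ∈ ball c r, (f w).re - (f c).re ≤ M)
    (hz : z ∈ ball c r) : ‖f z - f c‖ ≤ 2 * M * ‖z - c‖ / (r - ‖z - c‖) := by
  have hshift : MapsTo (c + ·) (ball (0 : ℂ) r) (ball c r) := fun u hu => by simpa using hu
  have hgd : DifferentiableOn ℂ (fun u => f (c + u) - f c) (ball 0 r) :=
    (hd.comp (by fun_prop) hshift).sub_const _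
  simpa using Complex.borelCaratheodory_zero (z := z - c) hM hgd
    (fun u hu => by simpa using hre _ (hshift hu)) (pos_of_mem_ball hz)
    (by simpa [dist_eq_norm] using hz) (by simp)

theorem isLittleO_sub_of_isLittleO_re {f : ℂ → ℂ} {c : ℂ} {n : ℕ} (hf : AnalyticAt ℂ f c)
    (ho : (fun w => (f w).re - (f c).re) =o[𝓝 c] (‖· - c‖ ^ n)) :
    (f · - f c) =o[𝓝 c] (‖· - c‖ ^ n) := by
  refine IsLittleO.of_bound fun ε hε => ?_
  set η : ℝ := ε / 2 ^ (n + 1)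
  have hη : 0 < η := by positivity
  obtain ⟨δ, hδ, hball⟩ := Metric.eventually_nhds_iff_ball.1
    (hf.eventually_analyticAt.and (ho.bound hη))
  filter_upwards [ball_mem_nhds c (half_pos hδ)] with w hw
  rcases eq_or_ne w c with rfl | hne
  · rw [sub_self, norm_zero]
    positivity
  -- Borel–Carathéodory on the disc of radius `2 * ‖w - c‖` costs only a factor `2 ^ (n + 1)`.
  set r : ℝ := ‖w - c‖
  have hr : 0 < r := norm_sub_pos_iff.2 hne
  have hrδ : 2 * r < δ := by
    have : r < δ / 2 := by simpa [dist_eq_norm] using hw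
    linarith
  have hsub : ball c (2 * r) ⊆ ball c δ := ball_subset_ball hrδ.le
  have hd : DifferentiableOn ℂ f (ball c (2 * r)) := fun u hu =>
    (hball u (hsub hu)).1.differentiableAt.differentiableWithinAt
  have hre : ∀ u ∈ ball c (2 * r), (f u).re - (f c).re ≤ η * (2 * r) ^ n := fun u hu => by
    have hur : ‖u - c‖ ≤ 2 * r := by simpa [dist_eq_norm] using (mem_ball.1 hu).le
    calc (f u).re - (f c).re ≤ η * ‖u - c‖ ^ n := by
          simpa using (le_abs_self _).trans (hball u (hsub hu)).2
      _ ≤ η * (2 * r) ^ n := by gcongr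
  have hwr : w ∈ ball c (2 * r) := by rw [mem_ball, dist_eq_norm]; linarith
  calc ‖f w - f c‖ ≤ 2 * (η * (2 * r) ^ n) * r / (2 * r - r) :=
        norm_sub_le_of_re_sub_le (by positivity) hd hre hwr
    _ = ε * r ^ n := by simp only [η]; field_simp; ring
    _ = ε * ‖r ^ n‖ := by rw [Real.norm_of_nonneg (by positivity)]

theorem div_mul_le_and_le_div_mul_of_abs_sub_le {x a q : ℝ} (hq₀ : 0 ≤ q) (hq₁ : q < 1)
    (h : |x - a| ≤ q * (x + a)) :
    (1 - q) / (1 + q) * a ≤ x ∧ x ≤ (1 + q) / (1 - q) * a := by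
  obtain ⟨hlower, hupper⟩ := abs_le.1 h
  rw [div_mul_eq_mul_div, div_mul_eq_mul_div, div_le_iff₀ (by linarith), le_div_iff₀ (by linarith)]
  constructor <;> linarith

theorem symmetric_harnack_normalized_general {h : ℂ → ℝ} {c z : ℂ} {R : ℝ} {n : ℕ}
    (hharm : HarmonicOnSet h (ball c R)) (hnonneg : ∀ w ∈ ball c R, 0 ≤ h w) (hc : 0 < h c)
    (ho : (h · - h c) =o[𝓝 c] (‖· - c‖ ^ n)) (hz : z ∈ ball c R) :
    (1 - (‖z - c‖ / R) ^ (n + 1)) / (1 + (‖z - c‖ / R) ^ (n + 1)) * h c ≤ h z ∧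
      h z ≤ (1 + (‖z - c‖ / R) ^ (n + 1)) / (1 - (‖z - c‖ / R) ^ (n + 1)) * h c := by
  have hR : 0 < R := pos_of_mem_ball hz
  have hcR : c ∈ ball c R := mem_ball_self hR
  obtain ⟨f, hf, hfh⟩ := (hharm.harmonicOnNhd isOpen_ball).exists_analyticOnNhd_ball_re_eq
  have hre : ∀ w ∈ ball c R, (f w).re = h w := fun w hw => hfh hw
  have hfo : (f · - f c) =o[𝓝 c] (‖· - c‖ ^ n) := by
    refine isLittleO_sub_of_isLittleO_re (hf c hcR) (ho.congr' ?_ .rfl)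
    filter_upwards [ball_mem_nhds c hR] with w hw
    rw [hre w hw, hre c hcR]
  have hq : ‖z - c‖ / R < 1 := (div_lt_one hR).2 (mem_ball_iff_norm.1 hz)
  have hq' : (‖z - c‖ / R) ^ (n + 1) < 1 := pow_lt_one₀ (by positivity) hq n.succ_ne_zero
  have hcayley := norm_cayleyTransform_le_of_isLittleO hf.differentiableOn
    (fun w hw => hre w hw ▸ hnonneg w hw) (hre c hcR ▸ hc) hfo hz
  rw [← hre z hz, ← hre c hcR]
  exact div_mul_le_and_le_div_mul_of_abs_sub_le (by positivity) hq' <|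
    abs_re_sub_re_le_of_norm_cayleyTransform_le (hre c hcR ▸ hc) (hre z hz ▸ hnonneg z hz) hq'.le
      hcayley

/-- **Symmetric Harnack inequality, normalized form.** If `h` is a positive harmonic
function on the unit disc with `h(0) = 1` and vanishing gradient at the origin, then
`(1−|λ|²)/(1+|λ|²) ≤ h(λ) ≤ (1+|λ|²)/(1−|λ|²)` for every `λ` in the disc. -/
theorem symmetric_harnack_normalized (h : ℂ → ℝ)
    (hharm : HarmonicOnSet h (Metric.ball (0 : ℂ) 1))
    (hpos : ∀ z ∈ Metric.ball (0 : ℂ) 1, 0 < h z)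
    (h0 : h 0 = 1)
    (hgrad : fderiv ℝ h 0 = 0) :
    ∀ lam ∈ Metric.ball (0 : ℂ) 1,
      (1 - ‖lam‖ ^ 2) / (1 + ‖lam‖ ^ 2) ≤ h lam ∧
        h lam ≤ (1 + ‖lam‖ ^ 2) / (1 - ‖lam‖ ^ 2) := by
  intro lam hlam
  have hdiff : DifferentiableAt ℝ h 0 :=
    (hharm.1.contDiffAt (Metric.ball_mem_nhds 0 one_pos)).differentiableAt two_ne_zero
  simpa [h0] using symmetric_harnack_normalized_general (n := 1) hharm (fun z hz => (hpos z hz).le)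
    (h0 ▸ one_pos) (by simpa using (isLittleO_sub_of_fderiv_eq_zero hdiff hgrad).norm_right) hlam
end

section
/- Let 0 < ρ < 1, 0 ≤ k < ρ, C ≥ 1 and n ≥ 1. Let r₁,…,rₙ be holomorphic nonvanishing functions on the disc ρD = {λ ∈ ℂ : |λ| < ρ} satisfying: (a) rⱼ(x) = conj(rⱼ(−x)) for every real x with |x| < ρ and every j; (b) Σⱼ |rⱼ(λ)|² ≤ C³ for every λ ∈ ρD; (c) Σⱼ |rⱼ(0)| ≤ 1. Then, with p := 1 + k²/ρ², one has Σⱼ |rⱼ(k)|ᵖ ≤ C^{3k²/ρ²}. -/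
open Finset

/-!
For a probability vector `p` with entropy `I`, let `Λ(z) = -∑ⱼ pⱼ log |rⱼ(z)|`. By the variational
principle `log ∑ⱼ aⱼ = max_p (∑ⱼ pⱼ log aⱼ + I)`, the bound `∑ⱼ |rⱼ|² ≤ M` makes the harmonic
function `H = 2Λ - I + log M` nonnegative, while `∑ⱼ |rⱼ(c)| ≤ A` gives `Λ(c) ≥ I - log A`. Over two
opposite points Harnack's inequality improves to
`u(c + v) + u(c - v) ≥ 2 (1 - t) / (1 + t) * u(c)` with `t = |v|² / ρ²`, because the terms linear in
`v` cancel in the sum of the two Poisson kernels. Applying it to `H`, with `p` the maximizer for the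
sum to be estimated, gives the exponent `1 + t`.
-/

section SymmetricHarnack

open Filter InnerProductSpace Metric Real Topology

variable {u : ℂ → ℝ} {c v : ℂ} {R : ℝ}

lemma le_poissonKernel_add_poissonKernel {z : ℂ} (hz : z ∈ sphere c R) (hv : ‖v‖ < R) :
    2 * ((R ^ 2 - ‖v‖ ^ 2) / (R ^ 2 + ‖v‖ ^ 2)) ≤
      poissonKernel c (c + v) z + poissonKernel c (c - v) z := by
  rw [mem_sphere_iff_norm] at hz
  have hR : 0 < R := (norm_nonneg v).trans_lt hv
  have hsub : 0 < ‖z - c - v‖ ^ 2 :=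
    pow_pos ((sub_pos.2 (hz ▸ hv)).trans_le (norm_sub_norm_le _ _)) 2
  have hadd : 0 < ‖z - c + v‖ ^ 2 :=
    pow_pos ((sub_pos.2 (hz ▸ hv)).trans_le (norm_sub_le_norm_add _ _)) 2
  have hparallelogram : ‖z - c - v‖ ^ 2 + ‖z - c + v‖ ^ 2 = 2 * (R ^ 2 + ‖v‖ ^ 2) := by
    have := parallelogram_law_with_norm ℝ (z - c) v
    rw [hz] at this
    linarith
  have ham_hm : 4 / (‖z - c - v‖ ^ 2 + ‖z - c + v‖ ^ 2) ≤
      (‖z - c - v‖ ^ 2)⁻¹ + (‖z - c + v‖ ^ 2)⁻¹ := by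
    rw [inv_add_inv hsub.ne' hadd.ne', div_le_div_iff₀ (by positivity) (by positivity)]
    nlinarith [sq_nonneg (‖z - c - v‖ ^ 2 - ‖z - c + v‖ ^ 2)]
  have hnum : 0 ≤ R ^ 2 - ‖v‖ ^ 2 := sub_nonneg.2 (pow_le_pow_left₀ (norm_nonneg v) hv.le 2)
  calc 2 * ((R ^ 2 - ‖v‖ ^ 2) / (R ^ 2 + ‖v‖ ^ 2))
      = (R ^ 2 - ‖v‖ ^ 2) * (4 / (‖z - c - v‖ ^ 2 + ‖z - c + v‖ ^ 2)) := by
        rw [hparallelogram]; field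
    _ ≤ (R ^ 2 - ‖v‖ ^ 2) * ((‖z - c - v‖ ^ 2)⁻¹ + (‖z - c + v‖ ^ 2)⁻¹) := by gcongr
    _ = poissonKernel c (c + v) z + poissonKernel c (c - v) z := by
        simp [poissonKernel_def, hz, mul_add, div_eq_mul_inv]

lemma circleIntegrable_poissonKernel_smul {E : Type*} [NormedAddCommGroup E] [NormedSpace ℝ E]
    {f : ℂ → E} {w : ℂ} (hf : ContinuousOn f (sphere c R)) (hw : w ∈ ball c R) :
    CircleIntegrable (poissonKernel c w • f) c R := by
  rw [poissonKernel_eq_re_herglotzRieszKernel]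
  rw [← abs_of_pos (pos_of_mem_ball hw)] at hf
  exact ((Complex.continuous_re.comp_continuousOn
    (continuousOn_herglotzRieszKernel_sphere hw)).smul hf).circleIntegrable'

lemma symmetric_harnack_closedBall (hu : HarmonicOnNhd u (closedBall c R))
    (hnonneg : ∀ z ∈ sphere c R, 0 ≤ u z) (hv : ‖v‖ < R) :
    2 * ((R ^ 2 - ‖v‖ ^ 2) / (R ^ 2 + ‖v‖ ^ 2)) * u c ≤ u (c + v) + u (c - v) := by
  set κ := 2 * ((R ^ 2 - ‖v‖ ^ 2) / (R ^ 2 + ‖v‖ ^ 2))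
  have hR : |R| = R := abs_of_pos ((norm_nonneg v).trans_lt hv)
  have hadd : c + v ∈ ball c R := by simpa [mem_ball_iff_norm] using hv
  have hsub : c - v ∈ ball c R := by simpa [mem_ball_iff_norm] using hv
  have hcont : ContinuousOn u (sphere c R) :=
    hu.contDiffOn.continuousOn.mono sphere_subset_closedBall
  have hu_int : CircleIntegrable u c R := ContinuousOn.circleIntegrable' (by rwa [hR])
  have hadd_int := circleIntegrable_poissonKernel_smul hcont hadd
  have hsub_int := circleIntegrable_poissonKernel_smul hcont hsub
  calc κ * u c = circleAverage (κ • u) c R := by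
        rw [circleAverage_smul, InnerProductSpace.HarmonicOnNhd.circleAverage_eq (by rwa [hR]),
          smul_eq_mul]
    _ ≤ circleAverage (poissonKernel c (c + v) • u + poissonKernel c (c - v) • u) c R := by
        refine circleAverage_mono hu_int.const_smul (hadd_int.add hsub_int) fun z hz ↦ ?_
        rw [hR] at hz
        simpa [add_mul] using
          mul_le_mul_of_nonneg_right (le_poissonKernel_add_poissonKernel hz hv) (hnonneg z hz)
    _ = u (c + v) + u (c - v) := by
        rw [circleAverage_add hadd_int hsub_int, hu.circleAverage_poissonKernel_smul hadd,
          hu.circleAverage_poissonKernel_smul hsub]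

lemma symmetric_harnack_ball (hu : HarmonicOnNhd u (ball c R))
    (hnonneg : ∀ z ∈ ball c R, 0 ≤ u z) (hv : ‖v‖ < R) :
    2 * ((R ^ 2 - ‖v‖ ^ 2) / (R ^ 2 + ‖v‖ ^ 2)) * u c ≤ u (c + v) + u (c - v) := by
  have hR : 0 < R := (norm_nonneg v).trans_lt hv
  have hsmaller : ∀ᶠ s in 𝓝[<] R,
      2 * ((s ^ 2 - ‖v‖ ^ 2) / (s ^ 2 + ‖v‖ ^ 2)) * u c ≤ u (c + v) + u (c - v) := by
    filter_upwards [Ioo_mem_nhdsLT hv] with s hs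
    have hsR : closedBall c s ⊆ ball c R := closedBall_subset_ball hs.2
    exact symmetric_harnack_closedBall (hu.mono hsR)
      (fun z hz ↦ hnonneg z (hsR (sphere_subset_closedBall hz))) hs.1
  have hcont : ContinuousAt
      (fun s : ℝ ↦ 2 * ((s ^ 2 - ‖v‖ ^ 2) / (s ^ 2 + ‖v‖ ^ 2)) * u c) R := by
    have : R ^ 2 + ‖v‖ ^ 2 ≠ 0 := by positivity
    fun_prop (disch := assumption)
  exact le_of_tendsto (hcont.mono_left nhdsWithin_le_nhds) hsmaller

lemma symmetric_harnack_of_le {m : ℝ} (hu : HarmonicOnNhd u (ball c R))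
    (hle : ∀ z ∈ ball c R, u z ≤ m) (hv : ‖v‖ < R) :
    (1 + ‖v‖ ^ 2 / R ^ 2) * (u (c + v) + u (c - v)) ≤
      4 * (‖v‖ ^ 2 / R ^ 2) * m + 2 * (1 - ‖v‖ ^ 2 / R ^ 2) * u c := by
  have hR : 0 < R := (norm_nonneg v).trans_lt hv
  have hgap := symmetric_harnack_ball ((harmonicOnNhd_const m).sub hu)
    (fun z hz ↦ sub_nonneg.2 (hle z hz)) hv
  have hratio : (R ^ 2 - ‖v‖ ^ 2) / (R ^ 2 + ‖v‖ ^ 2) =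
      (1 - ‖v‖ ^ 2 / R ^ 2) / (1 + ‖v‖ ^ 2 / R ^ 2) := by field
  rw [hratio, mul_div_assoc', div_mul_eq_mul_div, div_le_iff₀ (by positivity)] at hgap
  simp only [Pi.sub_apply] at hgap
  linarith

end SymmetricHarnack

section VariationalPrinciple

open Real

variable {ι : Type*} [Fintype ι] {a : ι → ℝ}

/-- The Shannon entropy of a probability vector `p`, in nats: the term `I` of the variational
principle. -/
noncomputable def shannonEntropy (p : ι → ℝ) : ℝ := ∑ j, negMulLog (p j)

lemma nonempty_of_mem_stdSimplex {𝕜 : Type*} [Semiring 𝕜] [PartialOrder 𝕜] [Nontrivial 𝕜]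
    {p : ι → 𝕜} (hp : p ∈ stdSimplex 𝕜 ι) : Nonempty ι := by
  by_contra! h
  simp [stdSimplex] at hp

lemma sum_mul_log_add_shannonEntropy_le {p : ι → ℝ} (hp : p ∈ stdSimplex ℝ ι) (ha : ∀ j, 0 < a j) :
    ∑ j, p j * log (a j) + shannonEntropy p ≤ log (∑ j, a j) := by
  have := nonempty_of_mem_stdSimplex hp
  have hS : 0 < ∑ j, a j := sum_pos (fun j _ ↦ ha j) univ_nonempty
  have hterm (j : ι) : p j * log (a j) + negMulLog (p j) ≤
      p j * log (∑ i, a i) + (a j / ∑ i, a i - p j) := by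
    have haj := ha j
    calc p j * log (a j) + negMulLog (p j)
        = p j * log (∑ i, a i) + a j / (∑ i, a i) * negMulLog (p j * ((∑ i, a i) / a j)) := by
          rw [negMulLog_mul, negMulLog.eq_def ((∑ i, a i) / a j), log_div hS.ne' haj.ne']
          field
      _ ≤ p j * log (∑ i, a i) + a j / (∑ i, a i) * (1 - p j * ((∑ i, a i) / a j)) := by
          gcongr
          exact negMulLog_le_one_sub_self (mul_nonneg (hp.1 j) (by positivity))
      _ = p j * log (∑ i, a i) + (a j / ∑ i, a i - p j) := by field
  calc ∑ j, p j * log (a j) + shannonEntropy p = ∑ j, (p j * log (a j) + negMulLog (p j)) :=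
        sum_add_distrib.symm
    _ ≤ ∑ j, (p j * log (∑ i, a i) + (a j / ∑ i, a i - p j)) := sum_le_sum fun j _ ↦ hterm j
    _ = log (∑ j, a j) := by
        rw [sum_add_distrib, sum_sub_distrib, ← sum_mul, ← sum_div, hp.2, div_self hS.ne']
        ring

lemma exists_sum_mul_log_add_shannonEntropy_eq [Nonempty ι] (ha : ∀ j, 0 < a j) :
    ∃ p ∈ stdSimplex ℝ ι, ∑ j, p j * log (a j) + shannonEntropy p = log (∑ j, a j) := by
  have hS : 0 < ∑ j, a j := sum_pos (fun j _ ↦ ha j) univ_nonempty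
  have hsum : ∑ j, a j / ∑ i, a i = 1 := by rw [← sum_div, div_self hS.ne']
  refine ⟨fun j ↦ a j / ∑ i, a i, ⟨fun j ↦ (div_pos (ha j) hS).le, hsum⟩, ?_⟩
  have hterm (j : ι) : a j / (∑ i, a i) * log (a j) + negMulLog (a j / ∑ i, a i) =
      a j / (∑ i, a i) * log (∑ i, a i) := by
    rw [negMulLog, log_div (ha j).ne' hS.ne']
    ring
  rw [shannonEntropy, ← sum_add_distrib, sum_congr rfl fun j _ ↦ hterm j, ← sum_mul, hsum, one_mul]

end VariationalPrinciple

section MeanLogNorm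

open InnerProductSpace Metric Real

variable {ι : Type*} [Fintype ι] {r : ι → ℂ → ℂ} {p : ι → ℝ} {c v : ℂ} {ρ M : ℝ}

/-- The mean of `log |rⱼ(z)|` with respect to the weights `p`, that is, minus the Lyapunov exponent
`Λ(z)` of the family `r`. -/
noncomputable def meanLogNorm (p : ι → ℝ) (r : ι → ℂ → ℂ) (z : ℂ) : ℝ :=
  ∑ j, p j * log ‖r j z‖

lemma harmonicOnNhd_meanLogNorm {U : Set ℂ} (hanalytic : ∀ j, AnalyticOnNhd ℂ (r j) U)
    (hne : ∀ j, ∀ z ∈ U, r j z ≠ 0) : HarmonicOnNhd (meanLogNorm p r) U := by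
  have hsum (s : Finset ι) : HarmonicOnNhd (∑ j ∈ s, p j • fun z ↦ log ‖r j z‖) U :=
    sum_induction _ (HarmonicOnNhd · U) (fun _ _ ↦ HarmonicOnNhd.add) (harmonicOnNhd_const 0)
      fun j _ ↦ HarmonicOnNhd.const_smul fun z hz ↦
        (hanalytic j z hz).harmonicAt_log_norm (hne j z hz)
  convert hsum univ using 1
  ext z
  simp [meanLogNorm]

lemma two_mul_meanLogNorm_add_shannonEntropy_le (hp : p ∈ stdSimplex ℝ ι) {z : ℂ}
    (hne : ∀ j, r j z ≠ 0) :
    2 * meanLogNorm p r z + shannonEntropy p ≤ log (∑ j, ‖r j z‖ ^ 2) := by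
  have h := sum_mul_log_add_shannonEntropy_le hp fun j ↦ pow_pos (norm_pos_iff.2 (hne j)) 2
  convert h using 2
  simp only [meanLogNorm, mul_sum, log_pow, Nat.cast_ofNat, mul_left_comm]

lemma sum_mul_log_sqrt_rpow (s : ℝ) {z w : ℂ} (hz : ∀ j, r j z ≠ 0) (hw : ∀ j, r j w ≠ 0) :
    ∑ j, p j * log (√(‖r j z‖ * ‖r j w‖) ^ s) =
      s * ((meanLogNorm p r z + meanLogNorm p r w) / 2) := by
  have hterm (j : ι) : p j * log (√(‖r j z‖ * ‖r j w‖) ^ s) =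
      s / 2 * (p j * log ‖r j z‖ + p j * log ‖r j w‖) := by
    have hz' := norm_pos_iff.2 (hz j)
    have hw' := norm_pos_iff.2 (hw j)
    rw [log_rpow (by positivity), log_sqrt (by positivity), log_mul hz'.ne' hw'.ne']
    ring
  simp only [hterm, ← mul_sum, sum_add_distrib, meanLogNorm]
  ring

lemma mean_meanLogNorm_add_shannonEntropy_le (hp : p ∈ stdSimplex ℝ ι)
    (hdiff : ∀ j, DifferentiableOn ℂ (r j) (ball c ρ))
    (hne : ∀ j, ∀ z ∈ ball c ρ, r j z ≠ 0) (hv : ‖v‖ < ρ)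
    (hbound : ∀ z ∈ ball c ρ, ∑ j, ‖r j z‖ ^ 2 ≤ M) :
    (1 + ‖v‖ ^ 2 / ρ ^ 2) * ((meanLogNorm p r (c + v) + meanLogNorm p r (c - v)) / 2) +
        shannonEntropy p ≤
      (1 - ‖v‖ ^ 2 / ρ ^ 2) * (meanLogNorm p r c + shannonEntropy p) + ‖v‖ ^ 2 / ρ ^ 2 * log M := by
  have hle (z : ℂ) (hz : z ∈ ball c ρ) : meanLogNorm p r z ≤ (log M - shannonEntropy p) / 2 := by
    have := nonempty_of_mem_stdSimplex hp
    have hlog : log (∑ j, ‖r j z‖ ^ 2) ≤ log M :=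
      log_le_log (sum_pos (fun j _ ↦ pow_pos (norm_pos_iff.2 (hne j z hz)) 2) univ_nonempty)
        (hbound z hz)
    linarith [two_mul_meanLogNorm_add_shannonEntropy_le hp fun j ↦ hne j z hz]
  have hharnack := symmetric_harnack_of_le
    (harmonicOnNhd_meanLogNorm (fun j ↦ (hdiff j).analyticOnNhd isOpen_ball) hne) hle hv
  linarith

lemma log_sum_sqrt_rpow_le [Nonempty ι] (hdiff : ∀ j, DifferentiableOn ℂ (r j) (ball c ρ))
    (hne : ∀ j, ∀ z ∈ ball c ρ, r j z ≠ 0) (hv : ‖v‖ < ρ)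
    (hbound : ∀ z ∈ ball c ρ, ∑ j, ‖r j z‖ ^ 2 ≤ M) :
    log (∑ j, √(‖r j (c + v)‖ * ‖r j (c - v)‖) ^ (1 + ‖v‖ ^ 2 / ρ ^ 2)) ≤
      (1 - ‖v‖ ^ 2 / ρ ^ 2) * log (∑ j, ‖r j c‖) + ‖v‖ ^ 2 / ρ ^ 2 * log M := by
  have hadd : c + v ∈ ball c ρ := by simpa [mem_ball_iff_norm] using hv
  have hsub : c - v ∈ ball c ρ := by simpa [mem_ball_iff_norm] using hv
  have hc : c ∈ ball c ρ := mem_ball_self (pos_of_mem_ball hadd)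
  have hpos (j : ι) {z : ℂ} (hz : z ∈ ball c ρ) : 0 < ‖r j z‖ := norm_pos_iff.2 (hne j z hz)
  have ht : 0 ≤ 1 - ‖v‖ ^ 2 / ρ ^ 2 :=
    sub_nonneg.2 (div_le_one_of_le₀ (pow_le_pow_left₀ (norm_nonneg v) hv.le 2) (by positivity))
  obtain ⟨p, hp, hmax⟩ := exists_sum_mul_log_add_shannonEntropy_eq fun j ↦
    rpow_pos_of_pos (sqrt_pos.2 (mul_pos (hpos j hadd) (hpos j hsub))) (1 + ‖v‖ ^ 2 / ρ ^ 2)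
  have hcenter : meanLogNorm p r c + shannonEntropy p ≤ log (∑ j, ‖r j c‖) :=
    sum_mul_log_add_shannonEntropy_le hp fun j ↦ hpos j hc
  rw [← hmax, sum_mul_log_sqrt_rpow _ (hne · _ hadd) (hne · _ hsub)]
  exact (mean_meanLogNorm_add_shannonEntropy_le hp hdiff hne hv hbound).trans (by gcongr)

theorem key_estimate_general {A : ℝ} (hdiff : ∀ j, DifferentiableOn ℂ (r j) (ball c ρ))
    (hne : ∀ j, ∀ z ∈ ball c ρ, r j z ≠ 0) (hv : ‖v‖ < ρ)
    (hbound : ∀ z ∈ ball c ρ, ∑ j, ‖r j z‖ ^ 2 ≤ M) (hcenter : ∑ j, ‖r j c‖ ≤ A) :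
    ∑ j, √(‖r j (c + v)‖ * ‖r j (c - v)‖) ^ (1 + ‖v‖ ^ 2 / ρ ^ 2) ≤
      A ^ (1 - ‖v‖ ^ 2 / ρ ^ 2) * M ^ (‖v‖ ^ 2 / ρ ^ 2) := by
  have hc : c ∈ ball c ρ := mem_ball_self ((norm_nonneg v).trans_lt hv)
  have hA : 0 ≤ A := (sum_nonneg fun j _ ↦ norm_nonneg _).trans hcenter
  rcases isEmpty_or_nonempty ι with _ | _
  · have hM : 0 ≤ M := by simpa using hbound c hc
    simpa using by positivity
  have hpos (j : ι) : 0 < ‖r j c‖ := norm_pos_iff.2 (hne j c hc)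
  have hsum : 0 < ∑ j, ‖r j c‖ := sum_pos (fun j _ ↦ hpos j) univ_nonempty
  have hM : 0 < M :=
    (sum_pos (fun j _ ↦ pow_pos (hpos j) 2) univ_nonempty).trans_le (hbound c hc)
  have ht : 0 ≤ 1 - ‖v‖ ^ 2 / ρ ^ 2 :=
    sub_nonneg.2 (div_le_one_of_le₀ (pow_le_pow_left₀ (norm_nonneg v) hv.le 2) (by positivity))
  calc ∑ j, √(‖r j (c + v)‖ * ‖r j (c - v)‖) ^ (1 + ‖v‖ ^ 2 / ρ ^ 2)
      ≤ exp (log (∑ j, √(‖r j (c + v)‖ * ‖r j (c - v)‖) ^ (1 + ‖v‖ ^ 2 / ρ ^ 2))) := le_exp_log _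
    _ ≤ exp ((1 - ‖v‖ ^ 2 / ρ ^ 2) * log (∑ j, ‖r j c‖) + ‖v‖ ^ 2 / ρ ^ 2 * log M) :=
        exp_le_exp.2 (log_sum_sqrt_rpow_le hdiff hne hv hbound)
    _ = (∑ j, ‖r j c‖) ^ (1 - ‖v‖ ^ 2 / ρ ^ 2) * M ^ (‖v‖ ^ 2 / ρ ^ 2) := by
        rw [exp_add, rpow_def_of_pos hsum, rpow_def_of_pos hM, mul_comm (log _), mul_comm (log M)]
    _ ≤ A ^ (1 - ‖v‖ ^ 2 / ρ ^ 2) * M ^ (‖v‖ ^ 2 / ρ ^ 2) := by gcongr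

end MeanLogNorm

/-- **Key analytic estimate for the dimension of quasicircles.** Let `0 < ρ < 1`,
`0 ≤ k < ρ`, `C ≥ 1`, and let `r₁,…,rₙ` be holomorphic nonvanishing functions on the
disc `ρ𝔻` satisfying the symmetry `rⱼ(x) = conj (rⱼ(−x))` for real `x`, the bound
`Σⱼ |rⱼ(λ)|² ≤ C³`, and `Σⱼ |rⱼ(0)| ≤ 1`. Then with `p = 1 + k²/ρ²` one has
`Σⱼ |rⱼ(k)|ᵖ ≤ C^(3k²/ρ²)`. -/
theorem key_estimate (ρ k C : ℝ) (hρ0 : 0 < ρ) (hρ1 : ρ < 1)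
    (hk0 : 0 ≤ k) (hkρ : k < ρ) (hC : 1 ≤ C)
    (n : ℕ) (hn : 1 ≤ n) (r : Fin n → ℂ → ℂ)
    (hdiff : ∀ j, ∀ z ∈ Metric.ball (0 : ℂ) ρ, DifferentiableAt ℂ (r j) z)
    (hne : ∀ j, ∀ z ∈ Metric.ball (0 : ℂ) ρ, r j z ≠ 0)
    (hsymm : ∀ j, ∀ x : ℝ, |x| < ρ → r j (x : ℂ) = starRingEnd ℂ (r j (-x : ℂ)))
    (hbound : ∀ lam ∈ Metric.ball (0 : ℂ) ρ, ∑ j, ‖r j lam‖ ^ 2 ≤ C ^ 3)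
    (h0 : ∑ j, ‖r j 0‖ ≤ 1) :
    ∑ j, ‖r j (k : ℂ)‖ ^ (1 + k ^ 2 / ρ ^ 2) ≤
      C ^ (3 * k ^ 2 / ρ ^ 2) := by
  have hnorm (j : Fin n) : ‖r j (-k)‖ = ‖r j k‖ := by
    rw [hsymm j k (by rwa [abs_of_nonneg hk0]), Complex.norm_conj]
  have hpow : C ^ (3 * k ^ 2 / ρ ^ 2) = (C ^ 3) ^ (k ^ 2 / ρ ^ 2) := by
    rw [← Real.rpow_natCast_mul (by positivity), Nat.cast_ofNat, mul_div_assoc]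
  simpa [hnorm, hpow] using key_estimate_general (v := k)
    (fun j z hz ↦ (hdiff j z hz).differentiableWithinAt) hne
    (by simpa [abs_of_nonneg hk0]) hbound h0
end
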